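/- Let λ, μ ∈ ℂ with 0 < |λ| < 1 < |μ| and |λ|·|μ|³ < 1, and let F = (F₁, F₂) be holomorphic on the open polydisk 𝔻 × 𝔻 ⊂ ℂ² with F(x,0) = (λx, 0) and F(0,y) = (0, μy) for all x, y ∈ 𝔻. Then there exist r ∈ (0,1) and constants C > 0, c > 0 such that for every n ∈ ℕ the following holds: if (p_k)_{0 ≤ k ≤ n} is a sequence of points of the polydisk {|x| ≤ r} × {|y| ≤ r} with p_{k+1} = F(p_k) for 0 ≤ k ≤ n−1, then the Jacobian matrix A = DF^n(p₀) (the product DF(p_{n−1})·…·DF(p₀) of the 2×2 complex Jacobian matrices of F along the orbit) satisfies |A₁₁| ≤ C·|λμ|^n, |A₁₂| ≤ C·|λμ|^n, |A₂₁| ≤ C, and c·|μ|^n ≤ |A₂₂| ≤ C·|μ|^n. -/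

import Mathlib

/-- The complex Jacobian matrix of a map `F : ℂ² → ℂ²` at a point, i.e. the 2×2 matrix
of complex partial derivatives of `F`. -/
noncomputable def jacobian (F : ℂ × ℂ → ℂ × ℂ) (p : ℂ × ℂ) : Matrix (Fin 2) (Fin 2) ℂ :=
  !![(fderiv ℂ F p (1, 0)).1, (fderiv ℂ F p (0, 1)).1;
     (fderiv ℂ F p (1, 0)).2, (fderiv ℂ F p (0, 1)).2]

/-!
By the Cauchy estimates the derivative `DF` is Lipschitz on a smaller polydisk. Since `F` is linear
on each axis, the first column of `DF (x, y)` differs from that of `diag(λ, μ)` by `O(|y|)` and the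
second one by `O(|x|)`, and hence `F (x, y) = (λ x, μ y) + O(|x y|)`. Along an orbit segment
`(x_k, y_k)`, `0 ≤ k ≤ n`, in a small polydisk, `x_k` therefore decreases and `y_k` increases
geometrically, so the sums of `|x_k|` and `|y_k|` are bounded uniformly in `n`. Feeding this back
into the recursion removes the losses in the rates: `|x_k| = O(|λ|^k)` and `|y_k| = O(|μ|^(k - n))`.

If `(u_k, v_k)` is a tangent vector carried along the orbit, its rescaled norm
`|u_k| / |λ|^k + |v_k| |μ|^(n - k)` grows in each step by a factor `1 + ε_k`; the off-diagonal terms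
contribute only `O(|μ|^(k - n))` and `O(|λ|^k)` to `ε_k`, so that the product of these factors is
bounded uniformly in `n`. Applied to the two basis vectors this gives all upper bounds. The lower
bound on the `(2, 2)` entry holds because the cone `|u| ≤ |v|` is invariant and in it `|v_k|` grows
by a factor of at least `|μ| - O(|x_k| + |y_k|)`.
-/

open Metric Finset
open scoped NNReal

section ComplexDerivative

variable {E F : Type*} [NormedAddCommGroup E] [NormedSpace ℂ E] [NormedAddCommGroup F]
  [NormedSpace ℂ F] {f : E → F} {c x y : E} {M R r δ : ℝ}

theorem norm_fderiv_le_of_forall_mem_ball_norm_le (hδ : 0 < δ)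
    (hf : DifferentiableOn ℂ f (ball x δ)) (hM : ∀ z ∈ ball x δ, ‖f z‖ ≤ M) :
    ‖fderiv ℂ f x‖ ≤ 2 * M / δ := by
  refine Complex.norm_fderiv_le_div_of_mapsTo_ball hf (fun z hz ↦ ?_) hδ
  rw [mem_closedBall_iff_norm]
  linarith [norm_sub_le (f z) (f x), hM z hz, hM x (mem_ball_self hδ)]

-- The Cauchy estimate is applied twice: to `f`, and then to the increment `z ↦ f (z + h) - f z`.
theorem norm_fderiv_sub_le_of_forall_mem_ball_norm_le (hδ : 0 < δ)
    (hf : DifferentiableOn ℂ f (ball c (r + 2 * δ)))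
    (hM : ∀ z ∈ ball c (r + 2 * δ), ‖f z‖ ≤ M) (hx : x ∈ ball c r) (hy : y ∈ ball c r) :
    ‖fderiv ℂ f x - fderiv ℂ f y‖ ≤ 2 * (2 * M / δ) / δ * ‖x - y‖ := by
  have hsub {z : E} {s : ℝ} (hz : z ∈ ball c s) : ball z δ ⊆ ball c (s + δ) :=
    ball_subset_ball' (by linarith [mem_ball.1 hz])
  have hdiff {z : E} (hz : z ∈ ball c (r + δ)) : DifferentiableAt ℂ f z :=
    hf.differentiableAt (isOpen_ball.mem_nhds (ball_subset_ball (by linarith) hz))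
  have hderiv {z : E} (hz : z ∈ ball c (r + δ)) : ‖fderiv ℂ f z‖ ≤ 2 * M / δ := by
    have hzδ : ball z δ ⊆ ball c (r + 2 * δ) := by convert hsub hz using 2; ring
    exact norm_fderiv_le_of_forall_mem_ball_norm_le hδ (hf.mono hzδ) fun w hw ↦ hM w (hzδ hw)
  have hshift {z : E} (hz : z ∈ ball y δ) : z + (x - y) ∈ ball c (r + δ) := by
    refine hsub hx (mem_ball_iff_norm.2 ?_)
    rw [show z + (x - y) - x = z - y by abel]
    exact mem_ball_iff_norm.1 hz
  have hincr {z : E} (hz : z ∈ ball y δ) :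
      DifferentiableAt ℂ (fun w ↦ f (w + (x - y)) - f w) z :=
    ((differentiableAt_comp_add_right _).2 (hdiff (hshift hz))).sub (hdiff (hsub hy hz))
  have hfderiv : fderiv ℂ (fun w ↦ f (w + (x - y)) - f w) y = fderiv ℂ f x - fderiv ℂ f y := by
    have hyδ := mem_ball_self (x := y) hδ
    rw [fderiv_fun_sub ((differentiableAt_comp_add_right _).2 (hdiff (hshift hyδ)))
      (hdiff (hsub hy hyδ)), fderiv_comp_add_right, add_sub_cancel]
  rw [← hfderiv, mul_div_right_comm, mul_assoc, ← mul_div_right_comm]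
  refine norm_fderiv_le_of_forall_mem_ball_norm_le hδ
    (fun z hz ↦ (hincr hz).differentiableWithinAt) fun z hz ↦ ?_
  simpa using (convex_ball c (r + δ)).norm_image_sub_le_of_norm_fderiv_le
    (fun w hw ↦ hdiff hw) (fun w hw ↦ hderiv hw) (hsub hy hz) (hshift hz)

theorem exists_lipschitzOnWith_fderiv_of_differentiableOn_ball [ProperSpace E]
    (hf : DifferentiableOn ℂ f (ball c R)) (hr : r < R) :
    ∃ K, LipschitzOnWith K (fderiv ℂ f) (ball c r) := by
  obtain ⟨δ, hδ, hδR⟩ : ∃ δ > 0, r + 2 * δ < R := ⟨(R - r) / 4, by linarith, by linarith⟩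
  obtain ⟨M, hM⟩ := (isCompact_closedBall c (r + 2 * δ)).exists_bound_of_continuousOn
    (hf.continuousOn.mono (closedBall_subset_ball hδR))
  refine ⟨_, LipschitzOnWith.of_dist_le' (K := 2 * (2 * M / δ) / δ) fun x hx y hy ↦ ?_⟩
  rw [dist_eq_norm, dist_eq_norm]
  exact norm_fderiv_sub_le_of_forall_mem_ball_norm_le hδ (hf.mono (ball_subset_ball hδR.le))
    (fun z hz ↦ hM z (ball_subset_closedBall hz)) hx hy

end ComplexDerivative

section PartialDerivative

variable {𝕜 E : Type*} [NontriviallyNormedField 𝕜] [NormedAddCommGroup E] [NormedSpace 𝕜 E]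
  {f : 𝕜 × 𝕜 → E} {x y : 𝕜}

theorem hasDerivAt_mk_left (hf : DifferentiableAt 𝕜 f (x, y)) :
    HasDerivAt (fun z ↦ f (z, y)) (fderiv 𝕜 f (x, y) (1, 0)) x :=
  hf.hasFDerivAt.comp_hasDerivAt x ((hasDerivAt_id x).prodMk (hasDerivAt_const x y))

theorem hasDerivAt_mk_right (hf : DifferentiableAt 𝕜 f (x, y)) :
    HasDerivAt (fun z ↦ f (x, z)) (fderiv 𝕜 f (x, y) (0, 1)) y :=
  hf.hasFDerivAt.comp_hasDerivAt y ((hasDerivAt_const y x).prodMk (hasDerivAt_id y))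

end PartialDerivative

section DiscreteGronwall

variable {s e : ℕ → ℝ} {a : ℝ} {n : ℕ}

theorem one_sub_mul_sum_range_le (h : ∀ k < n, s (k + 1) ≤ a * s k) :
    (1 - a) * ∑ k ∈ range n, s k ≤ s 0 - s n := by
  rw [← sum_range_sub', mul_sum]
  exact sum_le_sum fun k hk ↦ by linarith [h k (mem_range.1 hk)]

theorem sub_one_mul_sum_range_le (h : ∀ k < n, a * s k ≤ s (k + 1)) :
    (a - 1) * ∑ k ∈ range n, s k ≤ s n - s 0 := by
  rw [← sum_range_sub, mul_sum]
  exact sum_le_sum fun k hk ↦ by linarith [h k (mem_range.1 hk)]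

theorem le_exp_sum_mul_pow_mul (ha : 0 < a) (hs : ∀ k, 0 ≤ s k)
    (h : ∀ k < n, s (k + 1) ≤ (a + e k) * s k) :
    s n ≤ Real.exp ((∑ k ∈ range n, e k) / a) * a ^ n * s 0 := by
  induction n with
  | zero => simp
  | succ n ih =>
    have hexp : a + e n ≤ Real.exp (e n / a) * a := by
      rw [← div_le_iff₀ ha, add_div, div_self ha.ne', add_comm]
      exact Real.add_one_le_exp _
    calc s (n + 1) ≤ (a + e n) * s n := h n n.lt_succ_self
      _ ≤ Real.exp (e n / a) * a * s n := by gcongr; exact hs n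
      _ ≤ Real.exp (e n / a) * a * (Real.exp ((∑ k ∈ range n, e k) / a) * a ^ n * s 0) := by
        gcongr
        exact ih fun k hk ↦ h k (hk.trans n.lt_succ_self)
      _ = _ := by rw [sum_range_succ, add_div, Real.exp_add]; ring

theorem one_le_exp_two_mul_mul_one_sub {t : ℝ} (h₀ : 0 ≤ t) (h₁ : t ≤ 1 / 2) :
    1 ≤ Real.exp (2 * t) * (1 - t) := by
  nlinarith [Real.add_one_le_exp (2 * t)]

theorem le_exp_sum_Ico_mul_pow_div_pow_mul {j : ℕ} (ha : 0 < a) (hs : ∀ k, 0 ≤ s k) (hjn : j ≤ n)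
    (he₀ : ∀ k < n, 0 ≤ e k) (he : ∀ k < n, e k ≤ a / 2)
    (h : ∀ k < n, (a - e k) * s k ≤ s (k + 1)) :
    s j ≤ Real.exp (2 * ((∑ k ∈ Ico j n, e k) / a)) * (a ^ j / a ^ n) * s n := by
  induction n, hjn using Nat.le_induction with
  | base => simp [ha.ne']
  | succ n hjn ih =>
    have hn := n.lt_succ_self
    have hexp : 1 ≤ Real.exp (2 * (e n / a)) * (1 - e n / a) :=
      one_le_exp_two_mul_mul_one_sub (div_nonneg (he₀ n hn) ha.le)
        (by rw [div_le_iff₀ ha]; linarith [he n hn])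
    have hstep : s n ≤ Real.exp (2 * (e n / a)) / a * s (n + 1) :=
      calc s n ≤ Real.exp (2 * (e n / a)) * (1 - e n / a) * s n :=
            le_mul_of_one_le_left (hs n) hexp
        _ = Real.exp (2 * (e n / a)) / a * ((a - e n) * s n) := by field_simp
        _ ≤ _ := by gcongr; exact h n hn
    calc s j ≤ Real.exp (2 * ((∑ k ∈ Ico j n, e k) / a)) * (a ^ j / a ^ n) * s n :=
          ih (fun k hk ↦ he₀ k (hk.trans hn)) (fun k hk ↦ he k (hk.trans hn))
            fun k hk ↦ h k (hk.trans hn)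
      _ ≤ Real.exp (2 * ((∑ k ∈ Ico j n, e k) / a)) * (a ^ j / a ^ n) *
          (Real.exp (2 * (e n / a)) / a * s (n + 1)) := by gcongr
      _ = _ := by
        rw [sum_Ico_succ_top hjn, add_div, mul_add, Real.exp_add, pow_succ a n]
        field_simp

theorem sum_range_pow_div_pow_le {m : ℝ} (hm : 1 < m) (n : ℕ) :
    ∑ k ∈ range n, m ^ k / m ^ n ≤ 1 / (m - 1) := by
  rw [← sum_div, div_le_div_iff₀ (by positivity) (by linarith), geom_sum_mul]
  linarith

end DiscreteGronwall

/-- The recursive inequalities satisfied along a segment of `n` steps of an orbit near a saddle with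
stable rate `L` and unstable rate `m` by multiples `a`, `b` of the moduli of the stable and unstable
coordinates. The multiple is such that `b` and `a` bound the nonlinear corrections to the rates. -/
structure SaddleOrbit (L m : ℝ) (n : ℕ) (a b : ℕ → ℝ) : Prop where
  fst_nonneg : ∀ k, 0 ≤ a k
  snd_nonneg : ∀ k, 0 ≤ b k
  fst_le : ∀ k ≤ n, a k ≤ (m - 1) / 2
  snd_le : ∀ k ≤ n, b k ≤ (1 - L) / 2
  fst_succ_le : ∀ k < n, a (k + 1) ≤ (L + b k) * a k
  le_snd_succ : ∀ k < n, (m - a k) * b k ≤ b (k + 1)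

namespace SaddleOrbit

variable {L m : ℝ} {n : ℕ} {a b : ℕ → ℝ}

theorem sum_fst_le (h : SaddleOrbit L m n a b) (hL : L < 1) :
    ∑ k ∈ range n, a k ≤ (m - 1) / (1 - L) := by
  have hcontract : ∀ k < n, a (k + 1) ≤ (1 + L) / 2 * a k := fun k hk ↦
    (h.fst_succ_le k hk).trans
      (mul_le_mul_of_nonneg_right (by linarith [h.snd_le k hk.le]) (h.fst_nonneg k))
  rw [le_div_iff₀ (by linarith)]
  linarith [one_sub_mul_sum_range_le hcontract, h.fst_nonneg n, h.fst_le 0 n.zero_le]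

theorem sum_snd_le (h : SaddleOrbit L m n a b) (hm : 1 < m) :
    ∑ k ∈ range n, b k ≤ (1 - L) / (m - 1) := by
  have hexpand : ∀ k < n, (1 + m) / 2 * b k ≤ b (k + 1) := fun k hk ↦
    (mul_le_mul_of_nonneg_right (by linarith [h.fst_le k hk.le]) (h.snd_nonneg k)).trans
      (h.le_snd_succ k hk)
  rw [le_div_iff₀ (by linarith)]
  linarith [sub_one_mul_sum_range_le hexpand, h.snd_nonneg 0, h.snd_le n le_rfl]

theorem restrict {j : ℕ} (h : SaddleOrbit L m n a b) (hj : j ≤ n) : SaddleOrbit L m j a b where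
  fst_nonneg := h.fst_nonneg
  snd_nonneg := h.snd_nonneg
  fst_le k hk := h.fst_le k (hk.trans hj)
  snd_le k hk := h.snd_le k (hk.trans hj)
  fst_succ_le k hk := h.fst_succ_le k (hk.trans_le hj)
  le_snd_succ k hk := h.le_snd_succ k (hk.trans_le hj)

theorem exists_fst_le_mul_pow (hL₀ : 0 < L) (hm : 1 < m) :
    ∃ E, 0 ≤ E ∧ ∀ n a b, SaddleOrbit L m n a b → ∀ j ≤ n, a j ≤ E * L ^ j := by
  refine ⟨Real.exp ((1 - L) / (m - 1) / L) * ((m - 1) / 2), ?_, fun n a b h j hj ↦ ?_⟩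
  · exact mul_nonneg (Real.exp_pos _).le (by linarith)
  calc a j ≤ Real.exp ((∑ k ∈ range j, b k) / L) * L ^ j * a 0 :=
        le_exp_sum_mul_pow_mul hL₀ h.fst_nonneg (h.restrict hj).fst_succ_le
    _ ≤ Real.exp ((1 - L) / (m - 1) / L) * L ^ j * ((m - 1) / 2) := by
        gcongr
        exacts [h.fst_nonneg 0, (h.restrict hj).sum_snd_le hm, h.fst_le 0 n.zero_le]
    _ = _ := by ring

theorem exists_snd_le_mul_pow_div_pow (hL₀ : 0 < L) (hL₁ : L < 1) (hm : 1 < m) :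
    ∃ E, 0 ≤ E ∧ ∀ n a b, SaddleOrbit L m n a b → ∀ j ≤ n, b j ≤ E * (m ^ j / m ^ n) := by
  refine ⟨Real.exp (2 * ((m - 1) / (1 - L) / m)) * ((1 - L) / 2), ?_, fun n a b h j hj ↦ ?_⟩
  · exact mul_nonneg (Real.exp_pos _).le (by linarith)
  have hsum : ∑ k ∈ Ico j n, a k ≤ (m - 1) / (1 - L) :=
    (sum_le_sum_of_subset_of_nonneg (by rw [range_eq_Ico]; exact Ico_subset_Ico_left j.zero_le)
      fun k _ _ ↦ h.fst_nonneg k).trans (h.sum_fst_le hL₁)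
  calc b j ≤ Real.exp (2 * ((∑ k ∈ Ico j n, a k) / m)) * (m ^ j / m ^ n) * b n :=
        le_exp_sum_Ico_mul_pow_div_pow_mul (by linarith) h.snd_nonneg hj
          (fun k _ ↦ h.fst_nonneg k) (fun k hk ↦ by linarith [h.fst_le k hk.le]) h.le_snd_succ
    _ ≤ Real.exp (2 * ((m - 1) / (1 - L) / m)) * (m ^ j / m ^ n) * ((1 - L) / 2) := by
        gcongr
        exacts [h.snd_nonneg n, h.snd_le n le_rfl]
    _ = _ := by ring

end SaddleOrbit

/-- The recursive inequalities satisfied by the moduli `u`, `v` of the two coordinates of a tangent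
vector carried along an orbit segment as in `SaddleOrbit`. -/
structure SaddleCocycle (L m : ℝ) (n : ℕ) (a b u v : ℕ → ℝ) : Prop where
  fst_nonneg : ∀ k, 0 ≤ u k
  snd_nonneg : ∀ k, 0 ≤ v k
  fst_succ_le : ∀ k < n, u (k + 1) ≤ (L + b k) * u k + a k * v k
  snd_succ_le : ∀ k < n, v (k + 1) ≤ b k * u k + (m + a k) * v k
  le_snd_succ : ∀ k < n, (m - a k) * v k - b k * u k ≤ v (k + 1)

/-- The moduli `u k`, `v k` rescaled by the growth `L ^ k`, `m ^ k` of the linear saddle and added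
up. The factor `m ^ n` balances the two summands for an orbit segment of length `n`. -/
noncomputable def rescaledNorm (L m : ℝ) (n : ℕ) (u v : ℕ → ℝ) (k : ℕ) : ℝ :=
  u k / L ^ k + v k * (m ^ n / m ^ k)

/-- The relative growth of `rescaledNorm` in the `k`-th step of an orbit segment of length `n`. -/
noncomputable def rescaledGrowth (L m : ℝ) (n : ℕ) (a b : ℕ → ℝ) (k : ℕ) : ℝ :=
  b k / L + a k / m + a k / L ^ k / L * (m ^ k / m ^ n) + b k * (m ^ n / m ^ k) / m * L ^ k

theorem SaddleOrbit.exists_sum_rescaledGrowth_le {L m : ℝ} (hL₀ : 0 < L) (hL₁ : L < 1)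
    (hm : 1 < m) :
    ∃ D, ∀ n a b, SaddleOrbit L m n a b → ∑ k ∈ range n, rescaledGrowth L m n a b k ≤ D := by
  obtain ⟨E₁, hE₁, hfst⟩ := exists_fst_le_mul_pow hL₀ hm
  obtain ⟨E₂, hE₂, hsnd⟩ := exists_snd_le_mul_pow_div_pow hL₀ hL₁ hm
  have : 0 < m := by linarith
  refine ⟨(1 - L) / (m - 1) / L + (m - 1) / (1 - L) / m + E₁ / L * (1 / (m - 1)) +
    E₂ / m * (1 / (1 - L)), fun n a b h ↦ ?_⟩
  have hL_sum : ∑ k ∈ range n, L ^ k ≤ 1 / (1 - L) := by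
    rw [range_eq_Ico, ← pow_zero L]
    exact geom_sum_Ico_le_of_lt_one hL₀.le hL₁
  calc ∑ k ∈ range n, rescaledGrowth L m n a b k
      ≤ ∑ k ∈ range n, (b k / L + a k / m + E₁ / L * (m ^ k / m ^ n) + E₂ / m * L ^ k) := by
        refine sum_le_sum fun k hk ↦ ?_
        have hkn := (mem_range.1 hk).le
        have hα : a k / L ^ k ≤ E₁ := (div_le_iff₀ (by positivity)).2 (hfst n a b h k hkn)
        have hβ : b k * (m ^ n / m ^ k) ≤ E₂ := by
          rw [← inv_div (m ^ k), ← div_eq_mul_inv]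
          exact (div_le_iff₀ (by positivity)).2 (hsnd n a b h k hkn)
        unfold rescaledGrowth
        gcongr
    _ = (∑ k ∈ range n, b k) / L + (∑ k ∈ range n, a k) / m +
          E₁ / L * ∑ k ∈ range n, m ^ k / m ^ n + E₂ / m * ∑ k ∈ range n, L ^ k := by
        simp only [sum_add_distrib, sum_div, mul_sum]
    _ ≤ _ := by
        gcongr ?_ / L + ?_ / m + E₁ / L * ?_ + E₂ / m * ?_
        exacts [h.sum_snd_le hm, h.sum_fst_le hL₁, sum_range_pow_div_pow_le hm n]

namespace SaddleCocycle

variable {L m : ℝ} {n : ℕ} {a b u v : ℕ → ℝ}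

theorem rescaledNorm_succ_le (h : SaddleCocycle L m n a b u v) (hL : 0 < L) (hm : 0 < m)
    (ha : ∀ k, 0 ≤ a k) (hb : ∀ k, 0 ≤ b k) {k : ℕ} (hk : k < n) :
    rescaledNorm L m n u v (k + 1) ≤
      (1 + rescaledGrowth L m n a b k) * rescaledNorm L m n u v k := by
  set U := u k / L ^ k with hU
  set V := v k * (m ^ n / m ^ k) with hV
  have hU₀ : 0 ≤ U := div_nonneg (h.fst_nonneg k) (by positivity)
  have hV₀ : 0 ≤ V := mul_nonneg (h.snd_nonneg k) (by positivity)
  have hstable : u (k + 1) / L ^ (k + 1) ≤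
      (1 + b k / L) * U + a k / L ^ k / L * (m ^ k / m ^ n) * V := by
    calc u (k + 1) / L ^ (k + 1) ≤ ((L + b k) * u k + a k * v k) / L ^ (k + 1) := by
          gcongr; exact h.fst_succ_le k hk
      _ = _ := by rw [hU, hV]; field_simp; ring
  have hunstable : v (k + 1) * (m ^ n / m ^ (k + 1)) ≤
      b k * (m ^ n / m ^ k) / m * L ^ k * U + (1 + a k / m) * V := by
    calc v (k + 1) * (m ^ n / m ^ (k + 1)) ≤
          (b k * u k + (m + a k) * v k) * (m ^ n / m ^ (k + 1)) := by
          gcongr; exact h.snd_succ_le k hk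
      _ = _ := by rw [hU, hV]; field_simp; ring
  have hcross : 0 ≤ (a k / m + a k / L ^ k / L * (m ^ k / m ^ n)) * U +
      (b k / L + b k * (m ^ n / m ^ k) / m * L ^ k) * V := by
    have := ha k
    have := hb k
    positivity
  calc rescaledNorm L m n u v (k + 1) ≤ _ := add_le_add hstable hunstable
    _ ≤ (1 + rescaledGrowth L m n a b k) * (U + V) := by
        unfold rescaledGrowth
        linarith

theorem exists_div_pow_add_le (hL₀ : 0 < L) (hL₁ : L < 1) (hm : 1 < m) :
    ∃ C > 0, ∀ n a b u v, SaddleOrbit L m n a b → SaddleCocycle L m n a b u v →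
      u n / L ^ n + v n ≤ C * (u 0 + v 0 * m ^ n) := by
  obtain ⟨D, hD⟩ := SaddleOrbit.exists_sum_rescaledGrowth_le hL₀ hL₁ hm
  have hm₀ : 0 < m := by linarith
  refine ⟨Real.exp D, Real.exp_pos D, fun n a b u v horbit h ↦ ?_⟩
  have hnonneg : ∀ k, 0 ≤ rescaledNorm L m n u v k := fun k ↦
    add_nonneg (div_nonneg (h.fst_nonneg k) (by positivity))
      (mul_nonneg (h.snd_nonneg k) (by positivity))
  have hgronwall := le_exp_sum_mul_pow_mul one_pos hnonneg fun k hk ↦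
    h.rescaledNorm_succ_le hL₀ hm₀ horbit.fst_nonneg horbit.snd_nonneg hk
  calc u n / L ^ n + v n = rescaledNorm L m n u v n := by
        simp [rescaledNorm, hm₀.ne']
    _ ≤ Real.exp (∑ k ∈ range n, rescaledGrowth L m n a b k) * rescaledNorm L m n u v 0 := by
        simpa using hgronwall
    _ ≤ Real.exp D * rescaledNorm L m n u v 0 := by
        gcongr
        exacts [hnonneg 0, hD n a b horbit]
    _ = _ := by simp [rescaledNorm]

theorem fst_le_snd (h : SaddleCocycle L m n a b u v) (horbit : SaddleOrbit L m n a b)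
    (hL : 0 ≤ L) (h₀ : u 0 ≤ v 0) : ∀ k ≤ n, u k ≤ v k := by
  intro k hk
  induction k with
  | zero => exact h₀
  | succ k ih =>
    have hk' : k < n := hk
    have hcone : u k ≤ v k := ih hk'.le
    have hb := horbit.snd_nonneg k
    have hgap : L + b k + a k ≤ m - a k - b k := by
      linarith [horbit.fst_le k hk'.le, horbit.snd_le k hk'.le]
    calc u (k + 1) ≤ (L + b k) * u k + a k * v k := h.fst_succ_le k hk'
      _ ≤ (L + b k) * v k + a k * v k := by gcongr
      _ = (L + b k + a k) * v k := by ring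
      _ ≤ (m - a k - b k) * v k := mul_le_mul_of_nonneg_right hgap (h.snd_nonneg k)
      _ = (m - a k) * v k - b k * v k := by ring
      _ ≤ (m - a k) * v k - b k * u k := by gcongr
      _ ≤ v (k + 1) := h.le_snd_succ k hk'

theorem exists_mul_pow_le_snd (hL₀ : 0 ≤ L) (hL₁ : L < 1) (hm : 1 < m) :
    ∃ c > 0, ∀ n a b u v, SaddleOrbit L m n a b → SaddleCocycle L m n a b u v → u 0 ≤ v 0 →
      c * m ^ n * v 0 ≤ v n := by
  have hm₀ : 0 < m := by linarith
  set D := 2 * (((m - 1) / (1 - L) + (1 - L) / (m - 1)) / m) with hD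
  refine ⟨Real.exp (-D), Real.exp_pos _, fun n a b u v horbit h h₀ ↦ ?_⟩
  have hstep : ∀ k < n, (m - (a k + b k)) * v k ≤ v (k + 1) := fun k hk ↦ by
    have := mul_le_mul_of_nonneg_left (h.fst_le_snd horbit hL₀ h₀ k hk.le) (horbit.snd_nonneg k)
    linarith [h.le_snd_succ k hk]
  have hbackward : v 0 ≤ Real.exp D / m ^ n * v n :=
    calc v 0 ≤ Real.exp (2 * ((∑ k ∈ Ico 0 n, (a k + b k)) / m)) * (m ^ 0 / m ^ n) * v n :=
          le_exp_sum_Ico_mul_pow_div_pow_mul hm₀ h.snd_nonneg n.zero_le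
            (fun k _ ↦ add_nonneg (horbit.fst_nonneg k) (horbit.snd_nonneg k))
            (fun k hk ↦ by linarith [horbit.fst_le k hk.le, horbit.snd_le k hk.le]) hstep
      _ ≤ Real.exp D * (m ^ 0 / m ^ n) * v n := by
          rw [← range_eq_Ico, sum_add_distrib, hD]
          gcongr
          exacts [h.snd_nonneg n, horbit.sum_fst_le hL₁, horbit.sum_snd_le hm]
      _ = _ := by ring
  calc Real.exp (-D) * m ^ n * v 0 ≤
        Real.exp (-D) * m ^ n * (Real.exp D / m ^ n * v n) := by gcongr
    _ = v n := by rw [Real.exp_neg]; field_simp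

end SaddleCocycle

/-- The product `J (n - 1) * ⋯ * J 0`; for the Jacobian matrices `J k` of a map along an orbit this
is the Jacobian matrix of the `n`-th iterate. -/
def cocycle {M : Type*} [Monoid M] (J : ℕ → M) (n : ℕ) : M :=
  ((List.range n).map fun i ↦ J (n - 1 - i)).prod

theorem cocycle_zero {M : Type*} [Monoid M] (J : ℕ → M) : cocycle J 0 = 1 := rfl

theorem cocycle_succ {M : Type*} [Monoid M] (J : ℕ → M) (n : ℕ) :
    cocycle J (n + 1) = J n * cocycle J n := by
  simp only [cocycle, List.range_succ_eq_map, List.map_cons, List.map_map, List.prod_cons,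
    add_tsub_cancel_right, tsub_zero]
  congr! 4 with i
  simp only [Function.comp_apply]
  congr 1
  omega

/-- The matrix `J` differs from the linear saddle `diag(lam, mu)` by at most `b` in its first column
and by at most `a` in its second column. -/
structure NearSaddle {𝕜 : Type*} [NormedField 𝕜] (lam mu : 𝕜) (a b : ℝ)
    (J : Matrix (Fin 2) (Fin 2) 𝕜) : Prop where
  norm_zero_zero_sub_le : ‖J 0 0 - lam‖ ≤ b
  norm_one_zero_le : ‖J 1 0‖ ≤ b
  norm_zero_one_le : ‖J 0 1‖ ≤ a
  norm_one_one_sub_le : ‖J 1 1 - mu‖ ≤ a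

namespace NearSaddle

variable {𝕜 : Type*} [NormedField 𝕜] {lam mu : 𝕜} {a b : ℝ} {J : Matrix (Fin 2) (Fin 2) 𝕜}

theorem norm_mul_zero_le (h : NearSaddle lam mu a b J) (A : Matrix (Fin 2) (Fin 2) 𝕜) (c : Fin 2) :
    ‖(J * A) 0 c‖ ≤ (‖lam‖ + b) * ‖A 0 c‖ + a * ‖A 1 c‖ := by
  have hdiag : ‖J 0 0‖ ≤ ‖lam‖ + b :=
    (norm_le_norm_add_norm_sub' _ lam).trans (by gcongr; exact h.norm_zero_zero_sub_le)
  rw [Matrix.mul_apply, Fin.sum_univ_two]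
  refine (norm_add_le _ _).trans ?_
  rw [norm_mul, norm_mul]
  gcongr
  exact h.norm_zero_one_le

theorem norm_mul_one_le (h : NearSaddle lam mu a b J) (A : Matrix (Fin 2) (Fin 2) 𝕜) (c : Fin 2) :
    ‖(J * A) 1 c‖ ≤ b * ‖A 0 c‖ + (‖mu‖ + a) * ‖A 1 c‖ := by
  have hdiag : ‖J 1 1‖ ≤ ‖mu‖ + a :=
    (norm_le_norm_add_norm_sub' _ mu).trans (by gcongr; exact h.norm_one_one_sub_le)
  rw [Matrix.mul_apply, Fin.sum_univ_two]
  refine (norm_add_le _ _).trans ?_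
  rw [norm_mul, norm_mul]
  gcongr
  exact h.norm_one_zero_le

theorem le_norm_mul_one (h : NearSaddle lam mu a b J) (A : Matrix (Fin 2) (Fin 2) 𝕜) (c : Fin 2) :
    (‖mu‖ - a) * ‖A 1 c‖ - b * ‖A 0 c‖ ≤ ‖(J * A) 1 c‖ := by
  have hdiag : ‖mu‖ - a ≤ ‖J 1 1‖ := by
    linarith [norm_le_norm_add_norm_sub (J 1 1) mu, h.norm_one_one_sub_le]
  calc (‖mu‖ - a) * ‖A 1 c‖ - b * ‖A 0 c‖ ≤ ‖J 1 1‖ * ‖A 1 c‖ - ‖J 1 0‖ * ‖A 0 c‖ := by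
        gcongr
        exact h.norm_one_zero_le
    _ = ‖J 1 1 * A 1 c‖ - ‖-(J 1 0 * A 0 c)‖ := by rw [norm_neg, norm_mul, norm_mul]
    _ ≤ ‖J 1 1 * A 1 c - -(J 1 0 * A 0 c)‖ := norm_sub_norm_le _ _
    _ = ‖(J * A) 1 c‖ := by
        rw [Matrix.mul_apply, Fin.sum_univ_two, sub_neg_eq_add, add_comm]

theorem saddleCocycle {n : ℕ} {a b : ℕ → ℝ} {J : ℕ → Matrix (Fin 2) (Fin 2) 𝕜}
    (h : ∀ k < n, NearSaddle lam mu (a k) (b k) (J k)) (c : Fin 2) :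
    SaddleCocycle ‖lam‖ ‖mu‖ n a b (fun k ↦ ‖cocycle J k 0 c‖) (fun k ↦ ‖cocycle J k 1 c‖) where
  fst_nonneg _ := norm_nonneg _
  snd_nonneg _ := norm_nonneg _
  fst_succ_le k hk := by rw [cocycle_succ]; exact (h k hk).norm_mul_zero_le _ c
  snd_succ_le k hk := by rw [cocycle_succ]; exact (h k hk).norm_mul_one_le _ c
  le_snd_succ k hk := by rw [cocycle_succ]; exact (h k hk).le_norm_mul_one _ c

theorem exists_cocycle_bounds (hlam0 : 0 < ‖lam‖) (hlam1 : ‖lam‖ < 1) (hmu : 1 < ‖mu‖) :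
    ∃ C > 0, ∃ c > 0, ∀ n a b (J : ℕ → Matrix (Fin 2) (Fin 2) 𝕜),
      SaddleOrbit ‖lam‖ ‖mu‖ n a b → (∀ k < n, NearSaddle lam mu (a k) (b k) (J k)) →
        ‖cocycle J n 0 0‖ ≤ C * ‖lam‖ ^ n ∧ ‖cocycle J n 0 1‖ ≤ C * (‖lam‖ * ‖mu‖) ^ n ∧
        ‖cocycle J n 1 0‖ ≤ C ∧
        c * ‖mu‖ ^ n ≤ ‖cocycle J n 1 1‖ ∧ ‖cocycle J n 1 1‖ ≤ C * ‖mu‖ ^ n := by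
  obtain ⟨C, hC, hupper⟩ := SaddleCocycle.exists_div_pow_add_le hlam0 hlam1 hmu
  obtain ⟨c, hc, hlower⟩ := SaddleCocycle.exists_mul_pow_le_snd hlam0.le hlam1 hmu
  refine ⟨C, hC, c, hc, fun n a b J horbit hJ ↦ ?_⟩
  have hcol₀ : ‖cocycle J n 0 0‖ / ‖lam‖ ^ n + ‖cocycle J n 1 0‖ ≤ C := by
    simpa [cocycle_zero] using hupper n a b _ _ horbit (saddleCocycle hJ 0)
  have hcol₁ : ‖cocycle J n 0 1‖ / ‖lam‖ ^ n + ‖cocycle J n 1 1‖ ≤ C * ‖mu‖ ^ n := by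
    simpa [cocycle_zero] using hupper n a b _ _ horbit (saddleCocycle hJ 1)
  have hdiv (z : 𝕜) : 0 ≤ ‖z‖ / ‖lam‖ ^ n := by positivity
  refine ⟨?_, ?_, by linarith [hdiv (cocycle J n 0 0)], ?_, by linarith [hdiv (cocycle J n 0 1)]⟩
  · rw [← div_le_iff₀ (by positivity)]
    linarith [norm_nonneg (cocycle J n 1 0)]
  · rw [mul_pow, mul_left_comm, mul_comm, ← div_le_iff₀ (by positivity)]
    linarith [norm_nonneg (cocycle J n 1 1)]
  · simpa [cocycle_zero] using hlower n a b _ _ horbit (saddleCocycle hJ 1) (by simp [cocycle_zero])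

end NearSaddle

/-- At the point `p`, the map `F` and its derivative agree with those of the linear saddle
`(x, y) ↦ (lam * x, mu * y)` up to the errors typical for semi-linearizing coordinates, in which
both coordinate axes are invariant and `F` is linear on each of them. -/
structure SemilinearAt (F : ℂ × ℂ → ℂ × ℂ) (lam mu : ℂ) (K : ℝ) (p : ℂ × ℂ) : Prop where
  norm_sub_le : ‖F p - (lam * p.1, mu * p.2)‖ ≤ K * ‖p.2‖ * ‖p.1‖
  nearSaddle : NearSaddle lam mu (K * ‖p.1‖) (K * ‖p.2‖) (jacobian F p)

namespace SemilinearAt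

variable {F : ℂ × ℂ → ℂ × ℂ} {lam mu : ℂ} {K : ℝ} {p : ℂ × ℂ}

theorem norm_fst_le (h : SemilinearAt F lam mu K p) :
    ‖(F p).1‖ ≤ (‖lam‖ + K * ‖p.2‖) * ‖p.1‖ := by
  have herr : ‖(F p).1 - lam * p.1‖ ≤ K * ‖p.2‖ * ‖p.1‖ :=
    (_root_.norm_fst_le _).trans h.norm_sub_le
  linarith [norm_le_norm_add_norm_sub' (F p).1 (lam * p.1), norm_mul lam p.1]

theorem le_norm_snd (h : SemilinearAt F lam mu K p) :
    (‖mu‖ - K * ‖p.1‖) * ‖p.2‖ ≤ ‖(F p).2‖ := by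
  have herr : ‖(F p).2 - mu * p.2‖ ≤ K * ‖p.2‖ * ‖p.1‖ :=
    (norm_snd_le _).trans h.norm_sub_le
  linarith [norm_le_norm_add_norm_sub (F p).2 (mu * p.2), norm_mul mu p.2]

theorem saddleOrbit {n : ℕ} {r : ℝ} {p : ℕ → ℂ × ℂ} (hK : 0 ≤ K)
    (hKlam : K * r ≤ (1 - ‖lam‖) / 2) (hKmu : K * r ≤ (‖mu‖ - 1) / 2)
    (hp : ∀ k ≤ n, ‖(p k).1‖ ≤ r ∧ ‖(p k).2‖ ≤ r) (horbit : ∀ k < n, p (k + 1) = F (p k))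
    (h : ∀ k < n, SemilinearAt F lam mu K (p k)) :
    SaddleOrbit ‖lam‖ ‖mu‖ n (fun k ↦ K * ‖(p k).1‖) (fun k ↦ K * ‖(p k).2‖) where
  fst_nonneg _ := by positivity
  snd_nonneg _ := by positivity
  fst_le k hk := (mul_le_mul_of_nonneg_left (hp k hk).1 hK).trans hKmu
  snd_le k hk := (mul_le_mul_of_nonneg_left (hp k hk).2 hK).trans hKlam
  fst_succ_le k hk := by
    rw [horbit k hk, mul_left_comm]
    exact mul_le_mul_of_nonneg_left (h k hk).norm_fst_le hK
  le_snd_succ k hk := by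
    rw [horbit k hk, mul_left_comm]
    exact mul_le_mul_of_nonneg_left (h k hk).le_norm_snd hK

end SemilinearAt

section SemilinearizingCoordinates

variable {F : ℂ × ℂ → ℂ × ℂ} {lam mu : ℂ} {R r : ℝ} {K : ℝ≥0} {x y : ℂ}

theorem fderiv_apply_one_zero_of_linear_on_axis (hF : DifferentiableOn ℂ F (ball 0 R))
    (hsx : ∀ x, ‖x‖ < R → F (x, 0) = (lam * x, 0)) (hx : ‖x‖ < R) :
    fderiv ℂ F (x, 0) (1, 0) = (lam, 0) := by
  have hmem : (x, (0 : ℂ)) ∈ ball 0 R := by simpa [Prod.norm_mk] using hx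
  have hlin : HasDerivAt (fun z ↦ (lam * z, (0 : ℂ))) (lam, 0) x := by
    simpa using ((hasDerivAt_id x).const_mul lam).prodMk (hasDerivAt_const x (0 : ℂ))
  refine (hasDerivAt_mk_left (hF.differentiableAt (isOpen_ball.mem_nhds hmem))).unique
    (hlin.congr_of_eventuallyEq ?_)
  filter_upwards [isOpen_ball.mem_nhds (mem_ball_zero_iff.2 hx)] with z hz
  exact hsx z (mem_ball_zero_iff.1 hz)

theorem fderiv_apply_zero_one_of_linear_on_axis (hF : DifferentiableOn ℂ F (ball 0 R))
    (hsy : ∀ y, ‖y‖ < R → F (0, y) = (0, mu * y)) (hy : ‖y‖ < R) :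
    fderiv ℂ F (0, y) (0, 1) = (0, mu) := by
  have hmem : ((0 : ℂ), y) ∈ ball 0 R := by simpa [Prod.norm_mk] using hy
  have hlin : HasDerivAt (fun z ↦ ((0 : ℂ), mu * z)) (0, mu) y := by
    simpa using (hasDerivAt_const y (0 : ℂ)).prodMk ((hasDerivAt_id y).const_mul mu)
  refine (hasDerivAt_mk_right (hF.differentiableAt (isOpen_ball.mem_nhds hmem))).unique
    (hlin.congr_of_eventuallyEq ?_)
  filter_upwards [isOpen_ball.mem_nhds (mem_ball_zero_iff.2 hy)] with z hz
  exact hsy z (mem_ball_zero_iff.1 hz)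

theorem mk_mem_ball_zero (hx : ‖x‖ < r) (hy : ‖y‖ < r) : (x, y) ∈ ball (0 : ℂ × ℂ) r := by
  simpa [Prod.norm_mk] using ⟨hx, hy⟩

theorem norm_fderiv_apply_one_zero_sub_le (hF : DifferentiableOn ℂ F (ball 0 R))
    (hsx : ∀ x, ‖x‖ < R → F (x, 0) = (lam * x, 0)) (hr : r < R)
    (hK : LipschitzOnWith K (fderiv ℂ F) (ball 0 r)) (hx : ‖x‖ < r) (hy : ‖y‖ < r) :
    ‖fderiv ℂ F (x, y) (1, 0) - (lam, 0)‖ ≤ K * ‖y‖ := by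
  have h₀ : ‖(0 : ℂ)‖ < r := by simpa using (norm_nonneg x).trans_lt hx
  rw [← fderiv_apply_one_zero_of_linear_on_axis hF hsx (hx.trans hr),
    ← sub_apply]
  refine (ContinuousLinearMap.le_opNorm _ _).trans ?_
  simpa [Prod.norm_mk] using hK.norm_sub_le (mk_mem_ball_zero hx hy) (mk_mem_ball_zero hx h₀)

theorem norm_fderiv_apply_zero_one_sub_le (hF : DifferentiableOn ℂ F (ball 0 R))
    (hsy : ∀ y, ‖y‖ < R → F (0, y) = (0, mu * y)) (hr : r < R)
    (hK : LipschitzOnWith K (fderiv ℂ F) (ball 0 r)) (hx : ‖x‖ < r) (hy : ‖y‖ < r) :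
    ‖fderiv ℂ F (x, y) (0, 1) - (0, mu)‖ ≤ K * ‖x‖ := by
  have h₀ : ‖(0 : ℂ)‖ < r := by simpa using (norm_nonneg x).trans_lt hx
  rw [← fderiv_apply_zero_one_of_linear_on_axis hF hsy (hy.trans hr),
    ← sub_apply]
  refine (ContinuousLinearMap.le_opNorm _ _).trans ?_
  simpa [Prod.norm_mk] using hK.norm_sub_le (mk_mem_ball_zero hx hy) (mk_mem_ball_zero h₀ hy)

theorem norm_sub_linear_le (hF : DifferentiableOn ℂ F (ball 0 R))
    (hsx : ∀ x, ‖x‖ < R → F (x, 0) = (lam * x, 0))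
    (hsy : ∀ y, ‖y‖ < R → F (0, y) = (0, mu * y)) (hr : r < R)
    (hK : LipschitzOnWith K (fderiv ℂ F) (ball 0 r)) (hx : ‖x‖ < r) (hy : ‖y‖ < r) :
    ‖F (x, y) - (lam * x, mu * y)‖ ≤ K * ‖y‖ * ‖x‖ := by
  have hderiv {z : ℂ} (hz : ‖z‖ < r) : HasDerivAt (fun z ↦ F (z, y) - (lam * z, 0))
      (fderiv ℂ F (z, y) (1, 0) - (lam, 0)) z := by
    have hmem : (z, y) ∈ ball (0 : ℂ × ℂ) R := mk_mem_ball_zero (hz.trans hr) (hy.trans hr)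
    refine (hasDerivAt_mk_left (hF.differentiableAt (isOpen_ball.mem_nhds hmem))).sub ?_
    simpa using ((hasDerivAt_id z).const_mul lam).prodMk (hasDerivAt_const z (0 : ℂ))
  have hmean := (convex_ball (0 : ℂ) r).norm_image_sub_le_of_norm_hasDerivWithin_le
    (fun z hz ↦ (hderiv (mem_ball_zero_iff.1 hz)).hasDerivWithinAt)
    (fun z hz ↦ norm_fderiv_apply_one_zero_sub_le hF hsx hr hK (mem_ball_zero_iff.1 hz) hy)
    (mem_ball_self ((norm_nonneg x).trans_lt hx)) (mem_ball_zero_iff.2 hx)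
  simpa [hsy y (hy.trans hr), sub_sub] using hmean

theorem exists_forall_semilinearAt (hF : DifferentiableOn ℂ F (ball 0 R))
    (hsx : ∀ x, ‖x‖ < R → F (x, 0) = (lam * x, 0))
    (hsy : ∀ y, ‖y‖ < R → F (0, y) = (0, mu * y)) (hr : r < R) :
    ∃ K, 0 ≤ K ∧ ∀ x y, ‖x‖ < r → ‖y‖ < r → SemilinearAt F lam mu K (x, y) := by
  obtain ⟨K, hK⟩ := exists_lipschitzOnWith_fderiv_of_differentiableOn_ball hF hr
  refine ⟨K, K.2, fun x y hx hy ↦ ⟨norm_sub_linear_le hF hsx hsy hr hK hx hy, ?_⟩⟩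
  have hcol₀ := norm_fderiv_apply_one_zero_sub_le hF hsx hr hK hx hy
  have hcol₁ := norm_fderiv_apply_zero_one_sub_le hF hsy hr hK hx hy
  exact {
    norm_zero_zero_sub_le := (norm_fst_le _).trans hcol₀
    norm_one_zero_le := by simpa [jacobian] using (norm_snd_le _).trans hcol₀
    norm_zero_one_le := by simpa [jacobian] using (norm_fst_le _).trans hcol₁
    norm_one_one_sub_le := (norm_snd_le _).trans hcol₁ }

theorem exists_saddleOrbit (hlam1 : ‖lam‖ < 1) (hmu : 1 < ‖mu‖) (hR : 0 < R)
    (hF : DifferentiableOn ℂ F (ball 0 R)) (hsx : ∀ x, ‖x‖ < R → F (x, 0) = (lam * x, 0))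
    (hsy : ∀ y, ‖y‖ < R → F (0, y) = (0, mu * y)) :
    ∃ r K : ℝ, 0 < r ∧ r < R ∧ ∀ (n : ℕ) (p : ℕ → ℂ × ℂ),
      (∀ k ≤ n, ‖(p k).1‖ ≤ r ∧ ‖(p k).2‖ ≤ r) → (∀ k < n, p (k + 1) = F (p k)) →
        SaddleOrbit ‖lam‖ ‖mu‖ n (fun k ↦ K * ‖(p k).1‖) (fun k ↦ K * ‖(p k).2‖) ∧
        ∀ k < n, NearSaddle lam mu (K * ‖(p k).1‖) (K * ‖(p k).2‖) (jacobian F (p k)) := by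
  obtain ⟨K, hK, hsemi⟩ := exists_forall_semilinearAt hF hsx hsy (half_lt_self hR)
  obtain ⟨ρ, hρ, hKρ⟩ := exists_pos_mul_lt
    (lt_min (half_pos (sub_pos.2 hlam1)) (half_pos (sub_pos.2 hmu))) K
  obtain ⟨r, hr, hr_lt⟩ := exists_between (lt_min hρ (half_pos hR))
  obtain ⟨hrρ, hr_half⟩ := lt_min_iff.1 hr_lt
  obtain ⟨hKlam, hKmu⟩ := le_min_iff.1 ((mul_le_mul_of_nonneg_left hrρ.le hK).trans hKρ.le)
  refine ⟨r, K, hr, hr_half.trans (half_lt_self hR), fun n p hp horbit ↦ ?_⟩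
  have hsemi_orbit : ∀ k < n, SemilinearAt F lam mu K (p k) := fun k hk ↦
    hsemi _ _ ((hp k hk.le).1.trans_lt hr_half) ((hp k hk.le).2.trans_lt hr_half)
  exact ⟨SemilinearAt.saddleOrbit hK hKlam hKmu hp horbit hsemi_orbit,
    fun k hk ↦ (hsemi_orbit k hk).nearSaddle⟩

end SemilinearizingCoordinates

theorem stmt_11_general (lam mu : ℂ) (hlam0 : 0 < ‖lam‖) (hlam1 : ‖lam‖ < 1) (hmu : 1 < ‖mu‖)
    (F : ℂ × ℂ → ℂ × ℂ)
    (hF : ∀ p : ℂ × ℂ, ‖p.1‖ < 1 → ‖p.2‖ < 1 → DifferentiableAt ℂ F p)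
    (hsx : ∀ x : ℂ, ‖x‖ < 1 → F (x, 0) = (lam * x, 0))
    (hsy : ∀ y : ℂ, ‖y‖ < 1 → F (0, y) = (0, mu * y)) :
    ∃ r : ℝ, 0 < r ∧ r < 1 ∧ ∃ C c : ℝ, 0 < C ∧ 0 < c ∧
      ∀ (n : ℕ) (p : ℕ → ℂ × ℂ),
        (∀ k, k ≤ n → ‖(p k).1‖ ≤ r ∧ ‖(p k).2‖ ≤ r) →
        (∀ k, k < n → p (k + 1) = F (p k)) →
        ∀ A : Matrix (Fin 2) (Fin 2) ℂ,
          A = ((List.range n).map (fun i => jacobian F (p (n - 1 - i)))).prod →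
          ‖A 0 0‖ ≤ C * (‖lam‖ * ‖mu‖) ^ n ∧
          ‖A 0 1‖ ≤ C * (‖lam‖ * ‖mu‖) ^ n ∧
          ‖A 1 0‖ ≤ C ∧
          c * ‖mu‖ ^ n ≤ ‖A 1 1‖ ∧ ‖A 1 1‖ ≤ C * ‖mu‖ ^ n := by
  have hdiff : DifferentiableOn ℂ F (ball 0 1) := fun p hp ↦ by
    rw [mem_ball_zero_iff, Prod.norm_def, max_lt_iff] at hp
    exact (hF p hp.1 hp.2).differentiableWithinAt
  obtain ⟨r, K, hr, hr1, hsaddle⟩ := exists_saddleOrbit hlam1 hmu one_pos hdiff hsx hsy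
  obtain ⟨C, hC, c, hc, hbounds⟩ := NearSaddle.exists_cocycle_bounds hlam0 hlam1 hmu
  refine ⟨r, hr, hr1, C, c, hC, hc, fun n p hp horbit A hA ↦ ?_⟩
  obtain ⟨hnorms, hjacobians⟩ := hsaddle n p hp horbit
  obtain ⟨h₀₀, h₀₁, h₁₀, h₁₁_lower, h₁₁_upper⟩ := hbounds n _ _ _ hnorms hjacobians
  subst hA
  refine ⟨h₀₀.trans ?_, h₀₁, h₁₀, h₁₁_lower, h₁₁_upper⟩
  gcongr
  exact le_mul_of_one_le_right hlam0.le hmu.le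

/-- Lemma 3.3. For a dissipative holomorphic map in semi-linearizing
coordinates (`|λ||μ|³ < 1`), along an orbit staying in a (shrunken) polydisk for `n`
steps, the matrix `A = DF(p_{n-1})·…·DF(p₀)` of `DFⁿ(p₀)` satisfies
`A₁₁, A₁₂ = O(|λμ|ⁿ)`, `A₂₁ = O(1)` and `|A₂₂| ≍ |μ|ⁿ`. -/
theorem stmt_11 (lam mu : ℂ) (hlam0 : 0 < ‖lam‖) (hlam1 : ‖lam‖ < 1) (hmu : 1 < ‖mu‖)
    (hdiss : ‖lam‖ * ‖mu‖ ^ 3 < 1)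
    (F : ℂ × ℂ → ℂ × ℂ)
    (hF : ∀ p : ℂ × ℂ, ‖p.1‖ < 1 → ‖p.2‖ < 1 → DifferentiableAt ℂ F p)
    (hsx : ∀ x : ℂ, ‖x‖ < 1 → F (x, 0) = (lam * x, 0))
    (hsy : ∀ y : ℂ, ‖y‖ < 1 → F (0, y) = (0, mu * y)) :
    ∃ r : ℝ, 0 < r ∧ r < 1 ∧ ∃ C c : ℝ, 0 < C ∧ 0 < c ∧
      ∀ (n : ℕ) (p : ℕ → ℂ × ℂ),
        (∀ k, k ≤ n → ‖(p k).1‖ ≤ r ∧ ‖(p k).2‖ ≤ r) →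
        (∀ k, k < n → p (k + 1) = F (p k)) →
        ∀ A : Matrix (Fin 2) (Fin 2) ℂ,
          A = ((List.range n).map (fun i => jacobian F (p (n - 1 - i)))).prod →
          ‖A 0 0‖ ≤ C * (‖lam‖ * ‖mu‖) ^ n ∧
          ‖A 0 1‖ ≤ C * (‖lam‖ * ‖mu‖) ^ n ∧
          ‖A 1 0‖ ≤ C ∧
          c * ‖mu‖ ^ n ≤ ‖A 1 1‖ ∧ ‖A 1 1‖ ≤ C * ‖mu‖ ^ n :=
  stmt_11_general lam mu hlam0 hlam1 hmu F hF hsx hsy
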